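/- Let A : ℝ → Matrix (Fin p) (Fin p) ℂ be bounded and continuous with every entry almost automorphic, with fundamental matrix Φ_A, and suppose y' = A(t)y has an α-exponential dichotomy with constants c, α > 0 whose projection P commutes with Φ_A(t) for every t. Define the Green operator (Γφ)(t) = ∫_ℝ G_A(t,s)·φ(s) ds. Then for every bounded continuous φ : ℝ → ℂ^p, Γφ is bounded and continuous with sup_{t∈ℝ} ‖(Γφ)(t)‖ ≤ (2c/α)·sup_{t∈ℝ} ‖φ(t)‖; moreover, if φ is almost automorphic then Γφ is almost automorphic. -/

import Mathlib

open MeasureTheory Filter Topology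

attribute [local instance] Matrix.linftyOpNormedAddCommGroup Matrix.linftyOpNormedRing
  Matrix.linftyOpNormedAlgebra

/-- A continuous function `ψ : ℝ → V` into a Banach space is almost automorphic if for every
sequence of reals there is a subsequence `(τₙ)` and a function `ψ̃` with
`ψ(t+τₙ) → ψ̃(t)` and `ψ̃(t−τₙ) → ψ(t)` pointwise on `ℝ`. -/
def AlmostAutomorphic {V : Type*} [NormedAddCommGroup V] (ψ : ℝ → V) : Prop :=
  Continuous ψ ∧ ∀ σ : ℕ → ℝ, ∃ k : ℕ → ℕ, StrictMono k ∧ ∃ ψt : ℝ → V,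
    (∀ t : ℝ, Tendsto (fun n => ψ (t + σ (k n))) atTop (𝓝 (ψt t))) ∧
    (∀ t : ℝ, Tendsto (fun n => ψt (t - σ (k n))) atTop (𝓝 (ψ t)))

/-- `Φ` is a fundamental matrix of `y' = A(t) y`: it is differentiable with
`Φ'(t) = A(t) Φ(t)` and `Φ(t)` invertible for every `t`. -/
def IsFundamentalMatrix {p : ℕ} (A Φ : ℝ → Matrix (Fin p) (Fin p) ℂ) : Prop :=
  (∀ t : ℝ, HasDerivAt Φ (A t * Φ t) t) ∧ ∀ t : ℝ, IsUnit (Φ t)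

/-- The Green matrix associated with a projection `P` and a fundamental matrix `Φ`. -/
noncomputable def GreenMat {p : ℕ} (Φ : ℝ → Matrix (Fin p) (Fin p) ℂ)
    (P : Matrix (Fin p) (Fin p) ℂ) (t s : ℝ) : Matrix (Fin p) (Fin p) ℂ :=
  if s ≤ t then Φ t * (Φ s)⁻¹ * P else -(Φ t * (Φ s)⁻¹ * (1 - P))

/-!
Let `τ` be a sequence along which both `A` and `φ` have translation limits. The estimate
`‖Ψ_A(t,s) - Ψ_B(t,s)‖ ≤ K |∫ ‖A - B‖|` (variation of constants and Grönwall) and dominated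
convergence on `[s, t]` make the translates `Ψ_A(t+τₙ, s+τₙ)` a Cauchy sequence whose limit
translates back to `Ψ_A(t, s)`; no equation for the limit coefficient is needed. The Green kernel
inherits this, and the dichotomy gives the integrable majorant `c e^{-α|t-s|}` under which the
limits pass through `∫ G(t,s) φ(s) ds`, after the change of variables `s ↦ s ± τₙ`.
-/

section TranslationLimits

variable {V W : Type*}

/-- `g` is a limit of the translates of `f` along `τ`, from which the inverse translations return to
`f`. Almost automorphy asks that every sequence have a subsequence with such a limit. -/
structure IsReturnLimit [TopologicalSpace V] (f : ℝ → V) (τ : ℕ → ℝ) (g : ℝ → V) : Prop where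
  tendsto_add (t : ℝ) : Tendsto (fun n => f (t + τ n)) atTop (𝓝 (g t))
  tendsto_sub (t : ℝ) : Tendsto (fun n => g (t - τ n)) atTop (𝓝 (f t))

/-- The analogue of `IsReturnLimit` for kernels, translated along the diagonal: the property behind
"bi-almost automorphic" Green functions. -/
structure IsReturnLimit₂ [TopologicalSpace V] (K : ℝ → ℝ → V) (τ : ℕ → ℝ) (L : ℝ → ℝ → V) :
    Prop where
  tendsto_add (t s : ℝ) : Tendsto (fun n => K (t + τ n) (s + τ n)) atTop (𝓝 (L t s))
  tendsto_sub (t s : ℝ) : Tendsto (fun n => L (t - τ n) (s - τ n)) atTop (𝓝 (K t s))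

theorem IsReturnLimit.comp_strictMono [TopologicalSpace V] {f g : ℝ → V} {τ : ℕ → ℝ} {k : ℕ → ℕ}
    (h : IsReturnLimit f τ g) (hk : StrictMono k) : IsReturnLimit f (τ ∘ k) g :=
  ⟨fun t => (h.tendsto_add t).comp hk.tendsto_atTop,
    fun t => (h.tendsto_sub t).comp hk.tendsto_atTop⟩

theorem isReturnLimit_pi {ι : Type*} [TopologicalSpace V] {f g : ℝ → ι → V} {τ : ℕ → ℝ}
    (h : ∀ i, IsReturnLimit (fun t => f t i) τ (fun t => g t i)) : IsReturnLimit f τ g :=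
  ⟨fun t => tendsto_pi_nhds.2 fun i => (h i).tendsto_add t,
    fun t => tendsto_pi_nhds.2 fun i => (h i).tendsto_sub t⟩

theorem IsReturnLimit₂.smul [TopologicalSpace V] [TopologicalSpace W] [SMul V W]
    [ContinuousSMul V W] {K L : ℝ → ℝ → V} {f g : ℝ → W} {τ : ℕ → ℝ}
    (hK : IsReturnLimit₂ K τ L) (hf : IsReturnLimit f τ g) :
    IsReturnLimit₂ (fun t s => K t s • f s) τ (fun t s => L t s • g s) :=
  ⟨fun t s => (hK.tendsto_add t s).smul (hf.tendsto_add s),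
    fun t s => (hK.tendsto_sub t s).smul (hf.tendsto_sub s)⟩

namespace AlmostAutomorphic

variable [NormedAddCommGroup V] [NormedAddCommGroup W]

theorem exists_isReturnLimit {f : ℝ → V} (hf : AlmostAutomorphic f) (σ : ℕ → ℝ) :
    ∃ k : ℕ → ℕ, StrictMono k ∧ ∃ g, IsReturnLimit f (σ ∘ k) g := by
  obtain ⟨k, hk, g, hadd, hsub⟩ := hf.2 σ
  exact ⟨k, hk, g, hadd, hsub⟩

theorem exists_norm_le {f : ℝ → V} (hf : AlmostAutomorphic f) : ∃ C, ∀ t, ‖f t‖ ≤ C := by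
  by_contra! unbounded
  choose σ hσ using fun n : ℕ => unbounded n
  obtain ⟨k, hk, g, hg⟩ := hf.exists_isReturnLimit σ
  have tendsto_norm : Tendsto (fun n => ‖f (σ (k n))‖) atTop (𝓝 ‖g 0‖) := by
    simpa only [zero_add, Function.comp_apply] using (hg.tendsto_add 0).norm
  have tendsto_atTop : Tendsto (fun n => ‖f (σ (k n))‖) atTop atTop :=
    tendsto_atTop_mono (fun n => (hσ (k n)).le)
      (tendsto_natCast_atTop_atTop.comp hk.tendsto_atTop)
  exact not_tendsto_nhds_of_tendsto_atTop tendsto_atTop _ tendsto_norm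

theorem continuous_comp {f : ℝ → V} {T : V → W} (hT : Continuous T) (hf : AlmostAutomorphic f) :
    AlmostAutomorphic fun t => T (f t) := by
  refine ⟨hT.comp hf.1, fun σ => ?_⟩
  obtain ⟨k, hk, g, hg⟩ := hf.exists_isReturnLimit σ
  exact ⟨k, hk, fun t => T (g t), fun t => (hT.tendsto _).comp (hg.tendsto_add t),
    fun t => (hT.tendsto _).comp (hg.tendsto_sub t)⟩

theorem exists_common_subseq {f₁ : ℝ → V} {f₂ : ℝ → W} (h₁ : AlmostAutomorphic f₁)
    (h₂ : AlmostAutomorphic f₂) (σ : ℕ → ℝ) :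
    ∃ k : ℕ → ℕ, StrictMono k ∧ (∃ g₁, IsReturnLimit f₁ (σ ∘ k) g₁) ∧
      ∃ g₂, IsReturnLimit f₂ (σ ∘ k) g₂ := by
  obtain ⟨k, hk, g₁, hg₁⟩ := h₁.exists_isReturnLimit σ
  obtain ⟨l, hl, g₂, hg₂⟩ := h₂.exists_isReturnLimit (σ ∘ k)
  exact ⟨k ∘ l, hk.comp hl, ⟨g₁, hg₁.comp_strictMono hl⟩, g₂, hg₂⟩

theorem exists_common_subseq_finset {ι : Type*} {f : ι → ℝ → V} (hf : ∀ i, AlmostAutomorphic (f i))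
    (σ : ℕ → ℝ) (S : Finset ι) :
    ∃ k : ℕ → ℕ, StrictMono k ∧ ∀ i ∈ S, ∃ g, IsReturnLimit (f i) (σ ∘ k) g := by
  induction S using Finset.cons_induction with
  | empty => exact ⟨id, strictMono_id, by simp⟩
  | cons a S ha ih =>
    obtain ⟨k, hk, hS⟩ := ih
    obtain ⟨l, hl, ga, hga⟩ := (hf a).exists_isReturnLimit (σ ∘ k)
    refine ⟨k ∘ l, hk.comp hl, Finset.forall_mem_cons ha _ |>.2 ⟨⟨ga, hga⟩, fun i hi => ?_⟩⟩
    obtain ⟨g, hg⟩ := hS i hi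
    exact ⟨g, hg.comp_strictMono hl⟩

theorem pi {ι : Type*} [Fintype ι] {f : ℝ → ι → V}
    (hf : ∀ i, AlmostAutomorphic fun t => f t i) : AlmostAutomorphic f := by
  refine ⟨continuous_pi fun i => (hf i).1, fun σ => ?_⟩
  obtain ⟨k, hk, hlim⟩ := exists_common_subseq_finset hf σ Finset.univ
  choose g hg using fun i => hlim i (Finset.mem_univ i)
  have hpi : IsReturnLimit f (σ ∘ k) fun t i => g i t := isReturnLimit_pi hg
  exact ⟨k, hk, _, hpi.tendsto_add, hpi.tendsto_sub⟩

end AlmostAutomorphic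

end TranslationLimits

section EvolutionFamilies

variable {𝔸 : Type*} [NormedRing 𝔸] [NormedAlgebra ℝ 𝔸]

/-- `Ψ t s` is the evolution family (propagator) of `y' = A(t) y`. The equation in the initial time
is part of the definition, so that no inverses are needed. -/
structure IsEvolutionFamily (A : ℝ → 𝔸) (Ψ : ℝ → ℝ → 𝔸) : Prop where
  self (t : ℝ) : Ψ t t = 1
  hasDerivAt_left (t s : ℝ) : HasDerivAt (fun u => Ψ u s) (A t * Ψ t s) t
  hasDerivAt_right (t s : ℝ) : HasDerivAt (fun u => Ψ t u) (-(Ψ t s * A s)) s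

theorem hasDerivAt_units_inv [CompleteSpace 𝔸] {Φ : ℝ → 𝔸ˣ} {Φ' : 𝔸} {t : ℝ}
    (h : HasDerivAt (fun u => (Φ u : 𝔸)) Φ' t) :
    HasDerivAt (fun u => (↑(Φ u)⁻¹ : 𝔸)) (-(↑(Φ t)⁻¹ * Φ' * ↑(Φ t)⁻¹)) t := by
  simpa [Function.comp_def] using (hasFDerivAt_ringInverse (𝕜 := ℝ) (Φ t)).comp_hasDerivAt t h

theorem isEvolutionFamily_units [CompleteSpace 𝔸] {A : ℝ → 𝔸} {Φ : ℝ → 𝔸ˣ}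
    (hΦ : ∀ t, HasDerivAt (fun u => (Φ u : 𝔸)) (A t * Φ t) t) :
    IsEvolutionFamily A fun t s => Φ t * ↑(Φ s)⁻¹ where
  self t := (Φ t).mul_inv
  hasDerivAt_left t s := by
    simpa only [mul_assoc] using (hΦ t).mul_const (↑(Φ s)⁻¹ : 𝔸)
  hasDerivAt_right t s := by
    simpa [mul_assoc] using (hasDerivAt_units_inv (hΦ s)).const_mul (Φ t : 𝔸)

theorem tendsto_intervalIntegral_norm_sub {V ι : Type*} [NormedAddCommGroup V] {l : Filter ι}
    [l.IsCountablyGenerated] {F G : ι → ℝ → V} {f g : ℝ → V} {C : ℝ}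
    (hF : ∀ i, StronglyMeasurable (F i)) (hG : ∀ i, StronglyMeasurable (G i))
    (hFC : ∀ i u, ‖F i u‖ ≤ C) (hGC : ∀ i u, ‖G i u‖ ≤ C)
    (hf : ∀ u, Tendsto (fun i => F i u) l (𝓝 (f u)))
    (hg : ∀ u, Tendsto (fun i => G i u) l (𝓝 (g u))) (a b : ℝ) :
    Tendsto (fun i => ∫ u in a..b, ‖F i u - G i u‖) l (𝓝 (∫ u in a..b, ‖f u - g u‖)) :=
  intervalIntegral.tendsto_integral_filter_of_dominated_convergence (fun _ => C + C)
    (.of_forall fun i => ((hF i).sub (hG i)).norm.aestronglyMeasurable)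
    (.of_forall fun i => ae_of_all _ fun u _ =>
      (norm_norm _).trans_le (norm_sub_le_of_le (hFC i u) (hGC i u)))
    intervalIntegrable_const (ae_of_all _ fun u _ => ((hf u).sub (hg u)).norm)

namespace IsEvolutionFamily

variable {A B : ℝ → 𝔸} {Ψ Θ : ℝ → ℝ → 𝔸} {M : ℝ}

theorem continuous_left (h : IsEvolutionFamily A Ψ) (s : ℝ) : Continuous fun t => Ψ t s :=
  continuous_iff_continuousAt.2 fun t => (h.hasDerivAt_left t s).continuousAt

theorem continuous_right (h : IsEvolutionFamily A Ψ) (t : ℝ) : Continuous fun s => Ψ t s :=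
  continuous_iff_continuousAt.2 fun s => (h.hasDerivAt_right t s).continuousAt

theorem comp_add_const (h : IsEvolutionFamily A Ψ) (r : ℝ) :
    IsEvolutionFamily (fun t => A (t + r)) fun t s => Ψ (t + r) (s + r) where
  self t := h.self (t + r)
  hasDerivAt_left t s := (h.hasDerivAt_left (t + r) (s + r)).comp_add_const t r
  hasDerivAt_right t s := (h.hasDerivAt_right (t + r) (s + r)).comp_add_const s r

theorem comp_neg (h : IsEvolutionFamily A Ψ) :
    IsEvolutionFamily (fun t => -A (-t)) fun t s => Ψ (-t) (-s) where
  self t := h.self (-t)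
  hasDerivAt_left t s := by
    simpa [Function.comp_def] using (h.hasDerivAt_left (-t) (-s)).scomp t (hasDerivAt_neg t)
  hasDerivAt_right t s := by
    simpa [Function.comp_def] using (h.hasDerivAt_right (-t) (-s)).scomp s (hasDerivAt_neg s)

theorem norm_le_of_le (h : IsEvolutionFamily A Ψ) (hM : ∀ t, ‖A t‖ ≤ M) {s t : ℝ} (hst : s ≤ t) :
    ‖Ψ t s‖ ≤ ‖(1 : 𝔸)‖ * Real.exp (M * (t - s)) := by
  rw [← gronwallBound_ε0]
  refine norm_le_gronwallBound_of_norm_deriv_right_le (h.continuous_left s).continuousOn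
    (fun u _ => (h.hasDerivAt_left u s).hasDerivWithinAt) (by rw [h.self]) (fun u _ => ?_)
    t ⟨hst, le_rfl⟩
  rw [add_zero]
  exact (norm_mul_le _ _).trans (mul_le_mul_of_nonneg_right (hM u) (norm_nonneg _))

theorem norm_le (h : IsEvolutionFamily A Ψ) (hM : ∀ t, ‖A t‖ ≤ M) (t s : ℝ) :
    ‖Ψ t s‖ ≤ ‖(1 : 𝔸)‖ * Real.exp (M * |t - s|) := by
  rcases le_total s t with hst | hts
  · simpa only [abs_of_nonneg (sub_nonneg.2 hst)] using h.norm_le_of_le hM hst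
  · have reflected := h.comp_neg.norm_le_of_le (fun u => (norm_neg (A (-u))).trans_le (hM _))
      (neg_le_neg hts)
    simpa only [neg_neg, neg_sub_neg, abs_of_nonpos (sub_nonpos.2 hts), neg_sub] using reflected

section Perturbation

variable [CompleteSpace 𝔸]

theorem sub_eq_intervalIntegral (hΨ : IsEvolutionFamily A Ψ) (hΘ : IsEvolutionFamily B Θ)
    (hA : Continuous A) (hB : Continuous B) (t s : ℝ) :
    Ψ t s - Θ t s = ∫ u in s..t, Θ t u * (A u - B u) * Ψ u s := by
  have hderiv (u : ℝ) :
      HasDerivAt (fun u => Θ t u * Ψ u s) (Θ t u * (A u - B u) * Ψ u s) u := by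
    refine ((hΘ.hasDerivAt_right t u).mul (hΨ.hasDerivAt_left u s)).congr_deriv ?_
    noncomm_ring
  have hcont : Continuous fun u => Θ t u * (A u - B u) * Ψ u s :=
    ((hΘ.continuous_right t).mul (hA.sub hB)).mul (hΨ.continuous_left s)
  rw [intervalIntegral.integral_eq_sub_of_hasDerivAt (fun u _ => hderiv u)
    (hcont.intervalIntegrable s t), hΘ.self, hΨ.self, one_mul, mul_one]

theorem norm_sub_le (hΨ : IsEvolutionFamily A Ψ) (hΘ : IsEvolutionFamily B Θ)
    (hA : Continuous A) (hB : Continuous B) (hAM : ∀ t, ‖A t‖ ≤ M) (hBM : ∀ t, ‖B t‖ ≤ M)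
    (t s : ℝ) :
    ‖Ψ t s - Θ t s‖ ≤
      (‖(1 : 𝔸)‖ * Real.exp (M * |t - s|)) ^ 2 * |∫ u in s..t, ‖A u - B u‖| := by
  set Λ := ‖(1 : 𝔸)‖ * Real.exp (M * |t - s|)
  have hM : 0 ≤ M := (norm_nonneg _).trans (hAM 0)
  have integrand_le : ∀ u ∈ Set.uIcc s t,
      ‖Θ t u * (A u - B u) * Ψ u s‖ ≤ Λ ^ 2 * ‖A u - B u‖ := by
    intro u hu
    have hΘ_le : ‖Θ t u‖ ≤ Λ := (hΘ.norm_le hBM t u).trans <| by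
      unfold Λ
      gcongr ‖(1 : 𝔸)‖ * Real.exp (M * ?_)
      exact Set.abs_sub_right_of_mem_uIcc hu
    have hΨ_le : ‖Ψ u s‖ ≤ Λ := (hΨ.norm_le hAM u s).trans <| by
      unfold Λ
      gcongr ‖(1 : 𝔸)‖ * Real.exp (M * ?_)
      exact Set.abs_sub_left_of_mem_uIcc hu
    calc ‖Θ t u * (A u - B u) * Ψ u s‖ ≤ ‖Θ t u‖ * ‖A u - B u‖ * ‖Ψ u s‖ := norm_mul₃_le
      _ ≤ Λ * ‖A u - B u‖ * Λ := by gcongr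
      _ = Λ ^ 2 * ‖A u - B u‖ := by ring
  have majorant_integrable : IntervalIntegrable (fun u => Λ ^ 2 * ‖A u - B u‖) volume s t :=
    ((hA.sub hB).norm.const_mul (Λ ^ 2)).intervalIntegrable s t
  rw [hΨ.sub_eq_intervalIntegral hΘ hA hB]
  calc ‖∫ u in s..t, Θ t u * (A u - B u) * Ψ u s‖
      ≤ |∫ u in s..t, Λ ^ 2 * ‖A u - B u‖| :=
        intervalIntegral.norm_integral_le_abs_of_norm_le
          ((ae_restrict_mem measurableSet_uIoc).mono fun u hu =>
            integrand_le u (Set.uIoc_subset_uIcc hu)) majorant_integrable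
    _ = Λ ^ 2 * |∫ u in s..t, ‖A u - B u‖| := by
        rw [intervalIntegral.integral_const_mul, abs_mul, abs_of_nonneg (sq_nonneg Λ)]

variable {As : ℕ → ℝ → 𝔸} {Ψs : ℕ → ℝ → ℝ → 𝔸}

theorem exists_tendsto (hΨs : ∀ n, IsEvolutionFamily (As n) (Ψs n)) (hAs : ∀ n, Continuous (As n))
    (hM : ∀ n t, ‖As n t‖ ≤ M) (hlim : ∀ t, Tendsto (fun n => As n t) atTop (𝓝 (B t)))
    (t s : ℝ) : ∃ L, Tendsto (fun n => Ψs n t s) atTop (𝓝 L) := by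
  refine cauchySeq_tendsto_of_complete (cauchySeq_iff_tendsto_dist_atTop_0.2 ?_)
  rw [← prod_atTop_atTop_eq]
  have hint : Tendsto (fun m : ℕ × ℕ => ∫ u in s..t, ‖As m.1 u - As m.2 u‖)
      (atTop ×ˢ atTop) (𝓝 0) := by
    simpa only [sub_self, norm_zero, intervalIntegral.integral_zero] using
      tendsto_intervalIntegral_norm_sub (fun m : ℕ × ℕ => (hAs m.1).stronglyMeasurable)
        (fun m => (hAs m.2).stronglyMeasurable) (fun m => hM m.1) (fun m => hM m.2)
        (fun u => (hlim u).comp tendsto_fst) (fun u => (hlim u).comp tendsto_snd) s t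
  refine squeeze_zero (fun _ => dist_nonneg) (fun m => ?_)
    (by simpa only [abs_zero, mul_zero] using
      hint.abs.const_mul ((‖(1 : 𝔸)‖ * Real.exp (M * |t - s|)) ^ 2))
  rw [dist_eq_norm]
  exact (hΨs m.1).norm_sub_le (hΨs m.2) (hAs m.1) (hAs m.2) (hM m.1) (hM m.2) t s

theorem norm_limit_sub_le (hΨs : ∀ n, IsEvolutionFamily (As n) (Ψs n))
    (hAs : ∀ n, Continuous (As n)) (hAsM : ∀ n t, ‖As n t‖ ≤ M)
    (hlim : ∀ t, Tendsto (fun n => As n t) atTop (𝓝 (B t)))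
    (hΨ : IsEvolutionFamily A Ψ) (hA : Continuous A) (hAM : ∀ t, ‖A t‖ ≤ M) {t s : ℝ} {L : 𝔸}
    (hL : Tendsto (fun n => Ψs n t s) atTop (𝓝 L)) :
    ‖L - Ψ t s‖ ≤
      (‖(1 : 𝔸)‖ * Real.exp (M * |t - s|)) ^ 2 * |∫ u in s..t, ‖B u - A u‖| := by
  have hint := tendsto_intervalIntegral_norm_sub (fun n => (hAs n).stronglyMeasurable)
    (fun _ => hA.stronglyMeasurable) hAsM (fun _ => hAM) hlim (fun _ => tendsto_const_nhds) s t
  exact le_of_tendsto_of_tendsto' (hL.sub_const _).norm (hint.abs.const_mul _) fun n =>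
    (hΨs n).norm_sub_le hΨ (hAs n) hA (hAsM n) hAM t s

theorem exists_isReturnLimit₂ (h : IsEvolutionFamily A Ψ) (hA : Continuous A)
    (hM : ∀ t, ‖A t‖ ≤ M) {τ : ℕ → ℝ} (hAB : IsReturnLimit A τ B) :
    ∃ L, IsReturnLimit₂ Ψ τ L := by
  have hA_shift (r : ℝ) : Continuous fun t => A (t + r) := hA.comp (continuous_add_const r)
  choose L hL using exists_tendsto (fun n => h.comp_add_const (τ n)) (fun n => hA_shift (τ n))
    (fun n t => hM (t + τ n)) hAB.tendsto_add
  refine ⟨L, hL, fun t s => ?_⟩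
  have hL_back (n : ℕ) : ‖L (t - τ n) (s - τ n) - Ψ t s‖ ≤
      (‖(1 : 𝔸)‖ * Real.exp (M * |t - s|)) ^ 2 * |∫ u in s..t, ‖B (u - τ n) - A u‖| := by
    refine norm_limit_sub_le (fun m => h.comp_add_const (τ m - τ n)) (fun m => hA_shift _)
      (fun m u => hM _) (fun u => ?_) h hA hM ?_
    · simpa only [sub_add_eq_add_sub, add_sub_assoc] using hAB.tendsto_add (u - τ n)
    · simpa only [sub_add_eq_add_sub, add_sub_assoc] using hL (t - τ n) (s - τ n)
  have hB_meas : StronglyMeasurable B :=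
    stronglyMeasurable_of_tendsto atTop (fun n => (hA_shift (τ n)).stronglyMeasurable)
      (tendsto_pi_nhds.2 hAB.tendsto_add)
  have hB_shift (n : ℕ) : StronglyMeasurable fun u => B (u - τ n) :=
    hB_meas.comp_measurable (measurable_id.sub_const (τ n))
  have hBM (u : ℝ) : ‖B u‖ ≤ M :=
    le_of_tendsto' (hAB.tendsto_add u).norm fun n => hM (u + τ n)
  have hint : Tendsto (fun n => ∫ u in s..t, ‖B (u - τ n) - A u‖) atTop (𝓝 0) := by
    simpa only [sub_self, norm_zero, intervalIntegral.integral_zero] using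
      tendsto_intervalIntegral_norm_sub hB_shift (fun _ => hA.stronglyMeasurable)
        (fun n u => hBM (u - τ n)) (fun _ => hM) hAB.tendsto_sub (fun _ => tendsto_const_nhds) s t
  exact tendsto_iff_norm_sub_tendsto_zero.2 <| squeeze_zero (fun n => norm_nonneg _) hL_back
    (by simpa only [abs_zero, mul_zero] using hint.abs.const_mul _)

end Perturbation

end IsEvolutionFamily

end EvolutionFamilies

section ExponentialKernels

variable {E : Type*} [NormedAddCommGroup E] {k : ℝ → ℝ → E} {C α : ℝ}

theorem integral_exp_neg_mul_abs_sub (hα : 0 < α) (t : ℝ) :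
    ∫ s : ℝ, Real.exp (-α * |t - s|) = 2 / α := by
  rw [integral_sub_left_eq_self (fun s : ℝ => Real.exp (-α * |s|)) volume t,
    integral_comp_abs (f := fun x => Real.exp (-α * x)), integral_exp_mul_Ioi (by linarith) 0]
  simp [div_eq_mul_inv]

theorem integrable_exp_neg_mul_abs_sub (hα : 0 < α) (t : ℝ) :
    Integrable fun s : ℝ => Real.exp (-α * |t - s|) :=
  .of_integral_ne_zero <| by rw [integral_exp_neg_mul_abs_sub hα]; positivity

variable [NormedSpace ℝ E]

theorem norm_integral_le_of_exp_decay (hα : 0 < α) {f : ℝ → E} {t : ℝ}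
    (hf : ∀ s, ‖f s‖ ≤ C * Real.exp (-α * |t - s|)) : ‖∫ s, f s‖ ≤ 2 * C / α :=
  calc ‖∫ s, f s‖ ≤ ∫ s, C * Real.exp (-α * |t - s|) :=
        norm_integral_le_of_norm_le ((integrable_exp_neg_mul_abs_sub hα t).const_mul C)
          (ae_of_all _ hf)
    _ = 2 * C / α := by rw [integral_const_mul, integral_exp_neg_mul_abs_sub hα]; ring

theorem continuous_integral_of_exp_decay (hα : 0 < α)
    (hk : ∀ t s, ‖k t s‖ ≤ C * Real.exp (-α * |t - s|)) (hmeas : ∀ t, StronglyMeasurable (k t))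
    (hcont : ∀ t s, s ≠ t → ContinuousAt (fun u => k u s) t) :
    Continuous fun t => ∫ s, k t s := by
  have hC : 0 ≤ C :=
    nonneg_of_mul_nonneg_left ((norm_nonneg (k 0 0)).trans (hk 0 0)) (Real.exp_pos _)
  refine continuous_iff_continuousAt.2 fun t₀ => continuousAt_of_dominated
    (bound := fun s => C * Real.exp α * Real.exp (-α * |t₀ - s|))
    (.of_forall fun t => (hmeas t).aestronglyMeasurable) ?_
    ((integrable_exp_neg_mul_abs_sub hα t₀).const_mul _) ?_
  · filter_upwards [Metric.ball_mem_nhds t₀ one_pos] with t ht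
    refine ae_of_all _ fun s => (hk t s).trans ?_
    have htriangle : |t₀ - s| ≤ 1 + |t - s| := by
      rw [Metric.mem_ball', Real.dist_eq] at ht
      linarith [abs_sub_le t₀ t s]
    rw [mul_assoc, ← Real.exp_add]
    gcongr
    nlinarith
  · filter_upwards [Measure.ae_ne volume t₀] with s hs using hcont t₀ s hs

theorem IsReturnLimit₂.integral {l : ℝ → ℝ → E} {τ : ℕ → ℝ} (h : IsReturnLimit₂ k τ l)
    (hα : 0 < α) (hk : ∀ t s, ‖k t s‖ ≤ C * Real.exp (-α * |t - s|))
    (hmeas : ∀ t, StronglyMeasurable (k t)) :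
    IsReturnLimit (fun t => ∫ s, k t s) τ fun t => ∫ s, l t s := by
  have hk_shift (n : ℕ) (t s : ℝ) :
      ‖k (t + τ n) (s + τ n)‖ ≤ C * Real.exp (-α * |t - s|) := by
    simpa only [add_sub_add_right_eq_sub] using hk (t + τ n) (s + τ n)
  have hmeas_shift (n : ℕ) (t : ℝ) : StronglyMeasurable fun s => k (t + τ n) (s + τ n) :=
    (hmeas (t + τ n)).comp_measurable (measurable_id.add_const (τ n))
  have hl (t s : ℝ) : ‖l t s‖ ≤ C * Real.exp (-α * |t - s|) :=
    le_of_tendsto' (h.tendsto_add t s).norm fun n => hk_shift n t s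
  have hl_shift (n : ℕ) (t s : ℝ) :
      ‖l (t - τ n) (s - τ n)‖ ≤ C * Real.exp (-α * |t - s|) := by
    simpa only [sub_sub_sub_cancel_right] using hl (t - τ n) (s - τ n)
  have hl_meas (t : ℝ) : StronglyMeasurable (l t) :=
    stronglyMeasurable_of_tendsto atTop (fun n => hmeas_shift n t)
      (tendsto_pi_nhds.2 (h.tendsto_add t))
  have hl_meas_shift (n : ℕ) (t : ℝ) : StronglyMeasurable fun s => l (t - τ n) (s - τ n) :=
    (hl_meas (t - τ n)).comp_measurable (measurable_id.sub_const (τ n))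
  have hmajorant (t : ℝ) : Integrable fun s => C * Real.exp (-α * |t - s|) :=
    (integrable_exp_neg_mul_abs_sub hα t).const_mul C
  refine ⟨fun t => ?_, fun t => ?_⟩
  · refine (tendsto_integral_of_dominated_convergence _
      (fun n => (hmeas_shift n t).aestronglyMeasurable) (hmajorant t)
      (fun n => ae_of_all _ (hk_shift n t)) (ae_of_all _ (h.tendsto_add t))).congr fun n => ?_
    exact integral_add_right_eq_self (k (t + τ n)) (τ n)
  · refine (tendsto_integral_of_dominated_convergence _
      (fun n => (hl_meas_shift n t).aestronglyMeasurable) (hmajorant t)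
      (fun n => ae_of_all _ (hl_shift n t)) (ae_of_all _ (h.tendsto_sub t))).congr fun n => ?_
    exact integral_sub_right_eq_self (l (t - τ n)) (τ n)

end ExponentialKernels

section GreenKernels

/-- The Green kernel of an evolution family `Ψ` with projection `P`. With `P` to the right of
`Ψ t s`, its jump across `t = s` is `P + (1 - P) = 1`. -/
noncomputable def greenKernel {R : Type*} [Ring R] (Ψ : ℝ → ℝ → R) (P : R) (t s : ℝ) : R :=
  if s ≤ t then Ψ t s * P else -(Ψ t s * (1 - P))

theorem isReturnLimit₂_greenKernel {R : Type*} [Ring R] [TopologicalSpace R] [IsTopologicalRing R]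
    {Ψ L : ℝ → ℝ → R} {τ : ℕ → ℝ} (h : IsReturnLimit₂ Ψ τ L) (P : R) :
    IsReturnLimit₂ (greenKernel Ψ P) τ (greenKernel L P) where
  tendsto_add t s := by
    simp only [greenKernel, add_le_add_iff_right]
    split_ifs
    · exact (h.tendsto_add t s).mul_const P
    · exact ((h.tendsto_add t s).mul_const (1 - P)).neg
  tendsto_sub t s := by
    simp only [greenKernel, sub_le_sub_iff_right]
    split_ifs
    · exact (h.tendsto_sub t s).mul_const P
    · exact ((h.tendsto_sub t s).mul_const (1 - P)).neg

theorem continuousAt_greenKernel {R : Type*} [Ring R] [TopologicalSpace R] [IsTopologicalRing R]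
    {Ψ : ℝ → ℝ → R} (P : R) {t s : ℝ} (hΨ : Continuous fun u => Ψ u s) (hst : s ≠ t) :
    ContinuousAt (fun u => greenKernel Ψ P u s) t := by
  rcases hst.lt_or_gt with hlt | hgt
  · refine (hΨ.mul_const P).continuousAt.congr ?_
    filter_upwards [lt_mem_nhds hlt] with u hu using (if_pos hu.le).symm
  · refine (hΨ.mul_const (1 - P)).neg.continuousAt.congr ?_
    filter_upwards [gt_mem_nhds hgt] with u hu using (if_neg hu.not_ge).symm

theorem stronglyMeasurable_greenKernel {𝔸 : Type*} [NormedRing 𝔸] {Ψ : ℝ → ℝ → 𝔸} (P : 𝔸)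
    {t : ℝ} (hΨ : Continuous (Ψ t)) :
    StronglyMeasurable (greenKernel Ψ P t) :=
  .ite measurableSet_Iic (hΨ.mul_const P).stronglyMeasurable
    (hΨ.mul_const (1 - P)).neg.stronglyMeasurable

end GreenKernels

theorem green_operator_preserves_bounded_continuous_and_almost_automorphic_general
    {𝔸 E : Type*} [NormedRing 𝔸] [NormedAlgebra ℝ 𝔸] [CompleteSpace 𝔸]
    [NormedAddCommGroup E] [NormedSpace ℝ E] [CompleteSpace E] [Module 𝔸 E] [IsBoundedSMul 𝔸 E]
    {A : ℝ → 𝔸} {Ψ : ℝ → ℝ → 𝔸} (hA : AlmostAutomorphic A) (hΨ : IsEvolutionFamily A Ψ) {P : 𝔸}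
    {c α : ℝ} (hα : 0 < α)
    (hdich : ∀ t s : ℝ, ‖greenKernel Ψ P t s‖ ≤ c * Real.exp (-α * |t - s|))
    {φ : ℝ → E} (hφc : Continuous φ) (hφb : ∃ C, ∀ t, ‖φ t‖ ≤ C) :
    Continuous (fun t => ∫ s, greenKernel Ψ P t s • φ s) ∧
    (∀ t, ‖∫ s, greenKernel Ψ P t s • φ s‖ ≤ (2 * c / α) * ⨆ t, ‖φ t‖) ∧
    (AlmostAutomorphic φ → AlmostAutomorphic (fun t => ∫ s, greenKernel Ψ P t s • φ s)) := by
  have hφ_sup : ∀ s, ‖φ s‖ ≤ ⨆ t, ‖φ t‖ :=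
    le_ciSup (hφb.imp fun C hC => Set.forall_mem_range.2 hC)
  have decay : ∀ t s, ‖greenKernel Ψ P t s • φ s‖ ≤
      c * (⨆ t, ‖φ t‖) * Real.exp (-α * |t - s|) := fun t s =>
    calc ‖greenKernel Ψ P t s • φ s‖ ≤ ‖greenKernel Ψ P t s‖ * ‖φ s‖ := norm_smul_le _ _
      _ ≤ c * Real.exp (-α * |t - s|) * ⨆ t, ‖φ t‖ :=
        mul_le_mul (hdich t s) (hφ_sup s) (norm_nonneg _) ((norm_nonneg _).trans (hdich t s))
      _ = c * (⨆ t, ‖φ t‖) * Real.exp (-α * |t - s|) := by ring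
  have measurable_integrand : ∀ t, StronglyMeasurable fun s => greenKernel Ψ P t s • φ s :=
    fun t => (stronglyMeasurable_greenKernel P (hΨ.continuous_right t)).smul
      hφc.stronglyMeasurable
  have continuous_integral : Continuous fun t => ∫ s, greenKernel Ψ P t s • φ s :=
    continuous_integral_of_exp_decay hα decay measurable_integrand fun t s hst =>
      (continuousAt_greenKernel P (hΨ.continuous_left s) hst).smul continuousAt_const
  refine ⟨continuous_integral, fun t => ?_, fun hφ => ⟨continuous_integral, fun σ => ?_⟩⟩
  · exact (norm_integral_le_of_exp_decay hα (decay t)).trans_eq (by ring)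
  · obtain ⟨M, hM⟩ := hA.exists_norm_le
    obtain ⟨k, hk, ⟨B, hB⟩, ψ, hψ⟩ := hA.exists_common_subseq hφ σ
    obtain ⟨L, hL⟩ := hΨ.exists_isReturnLimit₂ hA.1 hM hB
    have hlim := ((isReturnLimit₂_greenKernel hL P).smul hψ).integral hα decay measurable_integrand
    exact ⟨k, hk, _, hlim.tendsto_add, hlim.tendsto_sub⟩

section Matrices

instance matrix_isBoundedSMul {n R : Type*} [Fintype n] [DecidableEq n] [NormedRing R] :
    IsBoundedSMul (Matrix n n R) (n → R) :=
  .of_norm_smul_le Matrix.linfty_opNorm_mulVec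

theorem almostAutomorphic_matrix {m n R : Type*} [Fintype m] [Fintype n] [NormedAddCommGroup R]
    {A : ℝ → Matrix m n R} (hA : ∀ i j, AlmostAutomorphic fun t => A t i j) :
    AlmostAutomorphic A :=
  (AlmostAutomorphic.pi fun i => AlmostAutomorphic.pi (hA i)).continuous_comp
    (T := Matrix.of) (continuous_matrix fun i j => continuous_apply_apply i j)

theorem IsFundamentalMatrix.isEvolutionFamily {p : ℕ} {A Φ : ℝ → Matrix (Fin p) (Fin p) ℂ}
    (h : IsFundamentalMatrix A Φ) : IsEvolutionFamily A fun t s => Φ t * (Φ s)⁻¹ := by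
  choose U hU using h.2
  obtain rfl : (fun t => (U t : Matrix (Fin p) (Fin p) ℂ)) = Φ := funext hU
  simpa only [Matrix.coe_units_inv] using isEvolutionFamily_units h.1

end Matrices

theorem green_operator_preserves_bounded_continuous_and_almost_automorphic {p : ℕ}
    (A ΦA : ℝ → Matrix (Fin p) (Fin p) ℂ)
    (hAc : Continuous A) (hAb : ∃ C, ∀ t, ‖A t‖ ≤ C)
    (hAaa : ∀ i j : Fin p, AlmostAutomorphic (fun t => A t i j))
    (hΦA : IsFundamentalMatrix A ΦA)
    (P : Matrix (Fin p) (Fin p) ℂ) (hP : P * P = P)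
    (hPcomm : ∀ t : ℝ, ΦA t * P = P * ΦA t)
    (c α : ℝ) (hc : 0 < c) (hα : 0 < α)
    (hdich : ∀ t s : ℝ, ‖GreenMat ΦA P t s‖ ≤ c * Real.exp (-α * |t - s|))
    (φ : ℝ → (Fin p → ℂ)) (hφc : Continuous φ) (hφb : ∃ C, ∀ t, ‖φ t‖ ≤ C) :
    Continuous (fun t => ∫ s : ℝ, (GreenMat ΦA P t s).mulVec (φ s)) ∧
    (∀ t : ℝ, ‖∫ s : ℝ, (GreenMat ΦA P t s).mulVec (φ s)‖ ≤ (2 * c / α) * ⨆ t : ℝ, ‖φ t‖) ∧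
    (AlmostAutomorphic φ →
      AlmostAutomorphic (fun t => ∫ s : ℝ, (GreenMat ΦA P t s).mulVec (φ s))) := by
  exact green_operator_preserves_bounded_continuous_and_almost_automorphic_general
    (almostAutomorphic_matrix hAaa) hΦA.isEvolutionFamily hα hdich hφc hφb
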